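/- Let ρ₀ satisfy the stated first-order equation with limits a and b at ∓∞, and fix α with 0 < α < min{√2(b² − a²)a, √2(b² − a²)b}. Let h : ℝ → ℝ be continuous with |h(z)| ≤ C e^{−α|z|} for all z ∈ ℝ and some C > 0. Then v₂*(z) := −ρ₀(z) · ∫_{−∞}^z ρ₀(ς)^{−2} ( ∫_{−∞}^ς h(τ) ρ₀(τ) dτ ) dς is well defined, twice continuously differentiable, satisfies −(v₂*)''(z) + f_B(ρ₀(z)) v₂*(z) = h(z) for all z ∈ ℝ, and lim_{z→−∞} v₂*(z) = 0. If in addition ∫_ℝ h(z) ρ₀(z) dz = 0, then v₂* is bounded on ℝ. -/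

import Mathlib

open Filter MeasureTheory

/-- `f_B(ρ) = (ρ² − a²)(ρ² − b²)(2ρ² − a² − b²)`. -/
noncomputable def fB (a b ρ : ℝ) : ℝ :=
  (ρ ^ 2 - a ^ 2) * (ρ ^ 2 - b ^ 2) * (2 * ρ ^ 2 - a ^ 2 - b ^ 2)

/-- `v₂*(z) = −ρ₀(z) ∫_{−∞}^z ρ₀(ς)⁻² (∫_{−∞}^ς h(τ)ρ₀(τ) dτ) dς`. -/
noncomputable def v2star (ρ₀ h : ℝ → ℝ) (z : ℝ) : ℝ :=
  -ρ₀ z * ∫ ς in Set.Iic z, ((ρ₀ ς) ^ 2)⁻¹ * ∫ τ in Set.Iic ς, h τ * ρ₀ τ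

/-!
The function `v₂*` is the reduction-of-order solution of `-v'' + (ρ₀''/ρ₀) v = h`: differentiating
the profile equation gives `ρ₀'' = f_B(ρ₀) ρ₀`, and substituting `v = -ρ₀ W` turns the equation into
`(ρ₀² W')' = h ρ₀`, which is integrated twice from `-∞`. Both integrations preserve an exponential
bound `e^{αz}`, which gives convergence. If `∫ h ρ₀ = 0`, the inner integral can be taken from
either end of the line, so `W'` decays like `e^{-α|z|}`; hence `W' ∈ L¹` and `W` is bounded.
-/

section ExponentialBounds

variable {E : Type*} [NormedAddCommGroup E] {g : ℝ → E} {K α : ℝ}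

theorem norm_le_mul_exp_of_norm_le_mul_exp_neg_abs (hα : 0 ≤ α)
    (hg : ∀ x, ‖g x‖ ≤ K * Real.exp (-α * |x|)) (x : ℝ) : ‖g x‖ ≤ K * Real.exp (α * x) := by
  have hK : 0 ≤ K :=
    nonneg_of_mul_nonneg_left ((norm_nonneg (g x)).trans (hg x)) (Real.exp_pos _)
  refine (hg x).trans ?_
  gcongr K * Real.exp ?_
  nlinarith [neg_abs_le x]

theorem integrableOn_Iic_of_norm_le_mul_exp (hα : 0 < α) (hgm : AEStronglyMeasurable g)
    (hg : ∀ x, ‖g x‖ ≤ K * Real.exp (α * x)) (x : ℝ) : IntegrableOn g (Set.Iic x) :=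
  ((integrableOn_exp_mul_Iic hα x).const_mul K).mono' hgm.restrict (ae_of_all _ hg)

theorem integrable_of_norm_le_mul_exp_neg_abs (hα : 0 < α) (hgm : AEStronglyMeasurable g)
    (hg : ∀ x, ‖g x‖ ≤ K * Real.exp (-α * |x|)) : Integrable g := by
  have hleft : IntegrableOn g (Set.Iic 0) :=
    integrableOn_Iic_of_norm_le_mul_exp hα hgm
      (norm_le_mul_exp_of_norm_le_mul_exp_neg_abs hα.le hg) 0
  have hright : IntegrableOn g (Set.Ioi 0) := by
    refine ((integrableOn_exp_mul_Ioi (neg_lt_zero.mpr hα) 0).const_mul K).mono' hgm.restrict ?_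
    filter_upwards [ae_restrict_mem measurableSet_Ioi] with x hx
    simpa only [abs_of_pos (Set.mem_Ioi.mp hx)] using hg x
  rw [← integrableOn_univ, ← Set.Iic_union_Ioi (a := (0 : ℝ))]
  exact hleft.union hright

end ExponentialBounds

section Calculus

variable {𝕜 : Type*} [NontriviallyNormedField 𝕜]

theorem contDiff_succ_of_hasDerivAt {F : Type*} [NormedAddCommGroup F] [NormedSpace 𝕜 F]
    {f f' : 𝕜 → F} {n : ℕ} (hf : ∀ x, HasDerivAt f (f' x) x) (hf' : ContDiff 𝕜 n f') :
    ContDiff 𝕜 (n + 1) f := by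
  have hderiv : deriv f = f' := funext fun x => (hf x).deriv
  exact contDiff_succ_iff_deriv.mpr
    ⟨fun x => (hf x).differentiableAt, by simp, hderiv ▸ hf'⟩

theorem deriv_deriv_neg_mul_of_reduction_of_order {ρ ρ' ρ'' W H h : 𝕜 → 𝕜} (hρ0 : ∀ x, ρ x ≠ 0)
    (hρ : ∀ x, HasDerivAt ρ (ρ' x) x) (hρ' : ∀ x, HasDerivAt ρ' (ρ'' x) x)
    (hW : ∀ x, HasDerivAt W ((ρ x ^ 2)⁻¹ * H x) x) (hH : ∀ x, HasDerivAt H (h x * ρ x) x) (x : 𝕜) :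
    deriv (deriv fun y => -ρ y * W y) x = -ρ'' x * W x - h x := by
  have hfirst : deriv (fun y => -ρ y * W y) = fun y => -ρ' y * W y - (ρ y)⁻¹ * H y := by
    funext y
    refine ((hρ y).fun_neg.fun_mul (hW y)).deriv.trans ?_
    field_simp [hρ0 y]
    ring
  rw [hfirst]
  refine (((hρ' x).fun_neg.fun_mul (hW x)).fun_sub
    (((hρ x).fun_inv (hρ0 x)).fun_mul (hH x))).deriv.trans ?_
  field_simp [hρ0 x]
  ring

end Calculus

section LeftPrimitive

variable {E : Type*} [NormedAddCommGroup E] [NormedSpace ℝ E] {g : ℝ → E} {K α : ℝ}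

/-- The primitive `x ↦ ∫_{-∞}^x g` of `g` that vanishes at `-∞`. It is only meaningful where `g` is
integrable on left half-lines; elsewhere the integral takes its junk value `0`. -/
noncomputable def leftPrimitive (g : ℝ → E) (x : ℝ) : E := ∫ t in Set.Iic x, g t

theorem tendsto_leftPrimitive_atBot (g : ℝ → E) : Tendsto (leftPrimitive g) atBot (nhds 0) :=
  tendsto_integral_Iic_zero tendsto_id

theorem hasDerivAt_leftPrimitive [CompleteSpace E] (hg : Continuous g)
    (hgi : ∀ x, IntegrableOn g (Set.Iic x)) (x : ℝ) : HasDerivAt (leftPrimitive g) (g x) x := by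
  have hsplit : leftPrimitive g = fun y => leftPrimitive g 0 + ∫ t in (0 : ℝ)..y, g t := by
    funext y
    rw [← intervalIntegral.integral_Iic_sub_Iic (hgi 0) (hgi y)]
    exact (add_sub_cancel _ _).symm
  rw [hsplit]
  exact (intervalIntegral.integral_hasDerivAt_right (hg.intervalIntegrable _ _)
    (hg.stronglyMeasurableAtFilter _ _) hg.continuousAt).const_add _

theorem contDiff_succ_leftPrimitive [CompleteSpace E] {n : ℕ} (hg : ContDiff ℝ n g)
    (hgi : ∀ x, IntegrableOn g (Set.Iic x)) : ContDiff ℝ (n + 1) (leftPrimitive g) :=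
  contDiff_succ_of_hasDerivAt (hasDerivAt_leftPrimitive hg.continuous hgi) hg

theorem norm_leftPrimitive_le_integral_norm (hg : Integrable g) (x : ℝ) :
    ‖leftPrimitive g x‖ ≤ ∫ t, ‖g t‖ :=
  (norm_integral_le_integral_norm _).trans
    (setIntegral_le_integral hg.norm (ae_of_all _ fun _ => norm_nonneg _))

theorem norm_leftPrimitive_le_mul_exp (hα : 0 < α) (hg : ∀ x, ‖g x‖ ≤ K * Real.exp (α * x))
    (x : ℝ) : ‖leftPrimitive g x‖ ≤ K / α * Real.exp (α * x) :=
  calc ‖leftPrimitive g x‖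
      ≤ ∫ t in Set.Iic x, K * Real.exp (α * t) :=
        norm_integral_le_of_norm_le ((integrableOn_exp_mul_Iic hα x).const_mul K) (ae_of_all _ hg)
    _ = K / α * Real.exp (α * x) := by
        rw [integral_const_mul, integral_exp_mul_Iic hα, mul_div_left_comm, mul_comm]

theorem leftPrimitive_eq_neg_leftPrimitive_comp_neg (hg : Integrable g) (h0 : ∫ t, g t = 0)
    (x : ℝ) : leftPrimitive g x = -leftPrimitive (fun t => g (-t)) (-x) := by
  have hsum := intervalIntegral.integral_Iic_add_Ioi (b := x) hg.integrableOn hg.integrableOn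
  rw [h0] at hsum
  simpa only [leftPrimitive, integral_comp_neg_Iic, neg_neg] using eq_neg_of_add_eq_zero_left hsum

theorem norm_leftPrimitive_le_mul_exp_neg_abs (hα : 0 < α) (hgm : AEStronglyMeasurable g)
    (hg : ∀ x, ‖g x‖ ≤ K * Real.exp (-α * |x|)) (h0 : ∫ t, g t = 0) (x : ℝ) :
    ‖leftPrimitive g x‖ ≤ K / α * Real.exp (-α * |x|) := by
  rcases le_total x 0 with hx | hx
  · simpa only [abs_of_nonpos hx, neg_mul_neg] using norm_leftPrimitive_le_mul_exp hα
      (norm_le_mul_exp_of_norm_le_mul_exp_neg_abs hα.le hg) x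
  · have hg_neg : ∀ t, ‖g (-t)‖ ≤ K * Real.exp (-α * |t|) := fun t => by
      simpa only [abs_neg] using hg (-t)
    rw [leftPrimitive_eq_neg_leftPrimitive_comp_neg
      (integrable_of_norm_le_mul_exp_neg_abs hα hgm hg) h0, norm_neg]
    simpa only [abs_of_nonneg hx, mul_neg, neg_mul] using norm_leftPrimitive_le_mul_exp hα
      (norm_le_mul_exp_of_norm_le_mul_exp_neg_abs hα.le hg_neg) (-x)

end LeftPrimitive

section Profile

variable {a b : ℝ} {ρ : ℝ → ℝ}

theorem contDiff_two_of_profile_equation (hρ : Differentiable ℝ ρ)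
    (hderiv : ∀ z, deriv ρ z = Real.sqrt 2 / 2 * ((ρ z) ^ 2 - a ^ 2) * (b ^ 2 - (ρ z) ^ 2)) :
    ContDiff ℝ 2 ρ := by
  have hρc : Continuous ρ := hρ.continuous
  have hρ1 : ContDiff ℝ 1 ρ :=
    contDiff_one_iff_deriv.mpr ⟨hρ, by rw [funext hderiv]; fun_prop⟩
  refine contDiff_succ_of_hasDerivAt (n := 1) (fun z => (hρ z).hasDerivAt) ?_
  rw [funext hderiv]
  fun_prop

theorem deriv_deriv_of_profile_equation (hρ : Differentiable ℝ ρ)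
    (hderiv : ∀ z, deriv ρ z = Real.sqrt 2 / 2 * ((ρ z) ^ 2 - a ^ 2) * (b ^ 2 - (ρ z) ^ 2))
    (z : ℝ) : deriv (deriv ρ) z = fB a b (ρ z) * ρ z := by
  have hsq := (hρ z).hasDerivAt.fun_pow 2
  rw [funext hderiv, (((hsq.sub_const (a ^ 2)).const_mul (Real.sqrt 2 / 2)).fun_mul
    (hsq.const_sub (b ^ 2))).deriv, hderiv, fB]
  have hsqrt : Real.sqrt 2 ^ 2 = 2 := Real.sq_sqrt zero_le_two
  linear_combination (ρ z * (ρ z ^ 2 - a ^ 2) * (b ^ 2 - ρ z ^ 2) *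
    (a ^ 2 + b ^ 2 - 2 * ρ z ^ 2) / 2) * hsqrt

end Profile

section ReductionOfOrder

variable {a b K α : ℝ} {ρ g h : ℝ → ℝ}

/-- The function `W' = ρ⁻² ∫_{-∞}^· g` obtained from `(ρ² W')' = g` by the first integration in
reduction of order. With `g = h ρ`, the solution is `v₂* = -ρ W`. -/
noncomputable def reducedDeriv (ρ g : ℝ → ℝ) (z : ℝ) : ℝ := ((ρ z) ^ 2)⁻¹ * leftPrimitive g z

theorem v2star_eq_neg_mul_leftPrimitive (ρ h : ℝ → ℝ) :
    v2star ρ h = fun z => -ρ z * leftPrimitive (reducedDeriv ρ fun τ => h τ * ρ τ) z :=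
  rfl

theorem continuous_reducedDeriv (hρ : Continuous ρ) (hρ0 : ∀ z, ρ z ≠ 0) (hg : Continuous g)
    (hgi : ∀ z, IntegrableOn g (Set.Iic z)) : Continuous (reducedDeriv ρ g) :=
  ((hρ.pow 2).inv₀ fun z => pow_ne_zero 2 (hρ0 z)).mul
    (continuous_iff_continuousAt.mpr fun z => (hasDerivAt_leftPrimitive hg hgi z).continuousAt)

theorem contDiff_one_reducedDeriv (hρ : ContDiff ℝ 1 ρ) (hρ0 : ∀ z, ρ z ≠ 0) (hg : Continuous g)
    (hgi : ∀ z, IntegrableOn g (Set.Iic z)) : ContDiff ℝ 1 (reducedDeriv ρ g) :=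
  ((hρ.pow 2).inv fun z => pow_ne_zero 2 (hρ0 z)).mul
    (contDiff_succ_leftPrimitive (n := 0) (contDiff_zero.mpr hg) hgi)

theorem norm_reducedDeriv_le_of_le {z w : ℝ} (ha : 0 < a) (hz : a ≤ ρ z)
    (hg : ‖leftPrimitive g z‖ ≤ K * w) : ‖reducedDeriv ρ g z‖ ≤ K / a ^ 2 * w := by
  rw [reducedDeriv, norm_mul, Real.norm_of_nonneg (by positivity), div_eq_inv_mul, mul_assoc]
  gcongr

theorem integrableOn_Iic_reducedDeriv (ha : 0 < a) (hα : 0 < α) (hρ : Continuous ρ)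
    (hρa : ∀ z, a ≤ ρ z) (hgc : Continuous g) (hg : ∀ z, ‖g z‖ ≤ K * Real.exp (α * z)) (z : ℝ) :
    IntegrableOn (reducedDeriv ρ g) (Set.Iic z) := by
  have hgi := integrableOn_Iic_of_norm_le_mul_exp hα hgc.aestronglyMeasurable hg
  have hWc := continuous_reducedDeriv hρ (fun x => (ha.trans_le (hρa x)).ne') hgc hgi
  exact integrableOn_Iic_of_norm_le_mul_exp hα hWc.aestronglyMeasurable
    (fun x => norm_reducedDeriv_le_of_le ha (hρa x) (norm_leftPrimitive_le_mul_exp hα hg x)) z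

theorem integrable_reducedDeriv (ha : 0 < a) (hα : 0 < α) (hρ : Continuous ρ)
    (hρa : ∀ z, a ≤ ρ z) (hgc : Continuous g) (hg : ∀ z, ‖g z‖ ≤ K * Real.exp (-α * |z|))
    (h0 : ∫ z, g z = 0) : Integrable (reducedDeriv ρ g) := by
  have hgm := hgc.aestronglyMeasurable (μ := volume)
  have hgi := integrable_of_norm_le_mul_exp_neg_abs hα hgm hg
  have hWc := continuous_reducedDeriv hρ (fun x => (ha.trans_le (hρa x)).ne') hgc
    fun _ => hgi.integrableOn
  exact integrable_of_norm_le_mul_exp_neg_abs hα hWc.aestronglyMeasurable fun x =>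
    norm_reducedDeriv_le_of_le ha (hρa x) (norm_leftPrimitive_le_mul_exp_neg_abs hα hgm hg h0 x)

theorem contDiff_two_v2star (hρ : ContDiff ℝ 2 ρ) (hρ0 : ∀ z, ρ z ≠ 0) (hh : Continuous h)
    (hgi : ∀ z, IntegrableOn (fun τ => h τ * ρ τ) (Set.Iic z))
    (hWi : ∀ z, IntegrableOn (reducedDeriv ρ fun τ => h τ * ρ τ) (Set.Iic z)) :
    ContDiff ℝ 2 (v2star ρ h) :=
  hρ.neg.mul (contDiff_succ_leftPrimitive (n := 1)
    (contDiff_one_reducedDeriv (hρ.of_le one_le_two) hρ0 (hh.mul hρ.continuous) hgi) hWi)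

theorem deriv_deriv_v2star (hρ : ContDiff ℝ 2 ρ) (hρ0 : ∀ z, ρ z ≠ 0) (hh : Continuous h)
    (hgi : ∀ z, IntegrableOn (fun τ => h τ * ρ τ) (Set.Iic z))
    (hWi : ∀ z, IntegrableOn (reducedDeriv ρ fun τ => h τ * ρ τ) (Set.Iic z)) (z : ℝ) :
    deriv (deriv (v2star ρ h)) z =
      -deriv (deriv ρ) z * leftPrimitive (reducedDeriv ρ fun τ => h τ * ρ τ) z - h z := by
  have hgc : Continuous fun τ => h τ * ρ τ := hh.mul hρ.continuous
  have hWc := continuous_reducedDeriv hρ.continuous hρ0 hgc hgi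
  rw [v2star_eq_neg_mul_leftPrimitive]
  exact deriv_deriv_neg_mul_of_reduction_of_order hρ0
    (fun x => (hρ.differentiable two_ne_zero x).hasDerivAt)
    (fun x => (hρ.differentiable_deriv_two x).hasDerivAt)
    (hasDerivAt_leftPrimitive hWc hWi) (hasDerivAt_leftPrimitive hgc hgi) z

theorem tendsto_v2star_atBot (hρ : ∀ z, ρ z ∈ Set.Icc a b) (h : ℝ → ℝ) :
    Tendsto (v2star ρ h) atBot (nhds 0) :=
  bdd_le_mul_tendsto_zero (Eventually.of_forall fun z => neg_le_neg (hρ z).2)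
    (Eventually.of_forall fun z => neg_le_neg (hρ z).1) (tendsto_leftPrimitive_atBot _)

theorem abs_v2star_le (ha : 0 ≤ a) (hρ : ∀ z, ρ z ∈ Set.Icc a b)
    (hW : Integrable (reducedDeriv ρ fun τ => h τ * ρ τ)) (z : ℝ) :
    |v2star ρ h z| ≤ b * ∫ t, ‖reducedDeriv ρ (fun τ => h τ * ρ τ) t‖ := by
  have hρ_nonneg : 0 ≤ ρ z := ha.trans (hρ z).1
  rw [v2star_eq_neg_mul_leftPrimitive, abs_mul, abs_neg, abs_of_nonneg hρ_nonneg]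
  exact mul_le_mul (hρ z).2 (norm_leftPrimitive_le_integral_norm hW z) (abs_nonneg _)
    (hρ_nonneg.trans (hρ z).2)

end ReductionOfOrder

theorem statement13_general {a b α C : ℝ} (ha : 0 < a) (hα : 0 < α) {ρ q h : ℝ → ℝ}
    (hρ : ContDiff ℝ 2 ρ) (hq : ∀ z, deriv (deriv ρ) z = q z * ρ z)
    (hbnd : ∀ z, ρ z ∈ Set.Icc a b) (hh : Continuous h)
    (hdec : ∀ z, |h z| ≤ C * Real.exp (-α * |z|)) :
    (∀ ς : ℝ, IntegrableOn (fun τ => h τ * ρ τ) (Set.Iic ς)) ∧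
    (∀ z : ℝ, IntegrableOn
      (fun ς => ((ρ ς) ^ 2)⁻¹ * ∫ τ in Set.Iic ς, h τ * ρ τ) (Set.Iic z)) ∧
    ContDiff ℝ 2 (v2star ρ h) ∧
    (∀ z : ℝ, -(deriv (deriv (v2star ρ h)) z) + q z * v2star ρ h z = h z) ∧
    Tendsto (v2star ρ h) atBot (nhds 0) ∧
    ((∫ z : ℝ, h z * ρ z) = 0 → ∃ M, ∀ z, |v2star ρ h z| ≤ M) := by
  have hρa : ∀ z, a ≤ ρ z := fun z => (hbnd z).1
  have hρ0 : ∀ z, ρ z ≠ 0 := fun z => (ha.trans_le (hρa z)).ne'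
  have hgc : Continuous fun τ => h τ * ρ τ := hh.mul hρ.continuous
  have hg : ∀ z, ‖h z * ρ z‖ ≤ C * b * Real.exp (-α * |z|) := fun z => by
    rw [norm_mul, Real.norm_of_nonneg (ha.le.trans (hρa z)), mul_right_comm]
    exact mul_le_mul (hdec z) (hbnd z).2 (ha.le.trans (hρa z)) ((abs_nonneg _).trans (hdec z))
  have hg_left := norm_le_mul_exp_of_norm_le_mul_exp_neg_abs hα.le hg
  have hgi := integrableOn_Iic_of_norm_le_mul_exp hα hgc.aestronglyMeasurable hg_left
  have hWi := integrableOn_Iic_reducedDeriv ha hα hρ.continuous hρa hgc hg_left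
  refine ⟨hgi, hWi, contDiff_two_v2star hρ hρ0 hh hgi hWi, fun z => ?_,
    tendsto_v2star_atBot hbnd h, fun h0 =>
      ⟨_, abs_v2star_le ha.le hbnd (integrable_reducedDeriv ha hα hρ.continuous hρa hgc hg h0)⟩⟩
  rw [deriv_deriv_v2star hρ hρ0 hh hgi hWi, hq, v2star_eq_neg_mul_leftPrimitive]
  ring

/-- For continuous `h` with `|h(z)| ≤ C e^{−α|z|}`, the function `v₂*` is
well defined, `C²`, solves `−(v₂*)'' + f_B(ρ₀)v₂* = h`, tends to `0` at `−∞`; and if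
moreover `∫ h ρ₀ = 0` then `v₂*` is bounded on `ℝ`. -/
theorem statement13 (a b α : ℝ) (ha : 0 < a) (hab : a < b)
    (hα : 0 < α)
    (hα' : α < min (Real.sqrt 2 * (b ^ 2 - a ^ 2) * a) (Real.sqrt 2 * (b ^ 2 - a ^ 2) * b))
    (ρ₀ : ℝ → ℝ) (hreg : ContDiff ℝ 1 ρ₀)
    (hderiv : ∀ z, deriv ρ₀ z =
      Real.sqrt 2 / 2 * ((ρ₀ z) ^ 2 - a ^ 2) * (b ^ 2 - (ρ₀ z) ^ 2))
    (hbnd : ∀ z, a < ρ₀ z ∧ ρ₀ z < b)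
    (hbot : Tendsto ρ₀ atBot (nhds a))
    (htop : Tendsto ρ₀ atTop (nhds b))
    (h : ℝ → ℝ) (hh : Continuous h)
    (C : ℝ) (hC : 0 < C) (hdec : ∀ z : ℝ, |h z| ≤ C * Real.exp (-α * |z|)) :
    (∀ ς : ℝ, IntegrableOn (fun τ => h τ * ρ₀ τ) (Set.Iic ς)) ∧
    (∀ z : ℝ, IntegrableOn
      (fun ς => ((ρ₀ ς) ^ 2)⁻¹ * ∫ τ in Set.Iic ς, h τ * ρ₀ τ) (Set.Iic z)) ∧
    ContDiff ℝ 2 (v2star ρ₀ h) ∧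
    (∀ z : ℝ, -(deriv (deriv (v2star ρ₀ h)) z) + fB a b (ρ₀ z) * v2star ρ₀ h z = h z) ∧
    Tendsto (v2star ρ₀ h) atBot (nhds 0) ∧
    ((∫ z : ℝ, h z * ρ₀ z) = 0 → ∃ M, ∀ z, |v2star ρ₀ h z| ≤ M) := by
  have hρ : Differentiable ℝ ρ₀ := hreg.differentiable one_ne_zero
  exact statement13_general ha hα (contDiff_two_of_profile_equation hρ hderiv)
    (deriv_deriv_of_profile_equation hρ hderiv) (fun z => ⟨(hbnd z).1.le, (hbnd z).2.le⟩) hh hdec
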